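/- Let K be a number field of degree n over ℚ, with ring of integers O_K and D_K the absolute value of its discriminant, and suppose K is either totally real or totally complex (a CM field); let ¯ : K → K be the identity in the first case and complex conjugation in the second. Let α be a totally positive element of the fixed field of this involution, and define q_α(x,y) = Tr_{K/ℚ}(α·x·ȳ), extended ℝ-bilinearly to K⊗ℝ. Let det(O_K,q_α) denote the determinant of the Gram matrix of q_α in a ℤ-basis of O_K, and suppose μ > 0 is such that for every x ∈ K⊗ℝ there exists c ∈ O_K with q_α(x−c,x−c) ≤ μ. Then M(K) ≤ (μ / (n · det(O_K,q_α)^{1/n}))^{n/2} · √(D_K). -/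

import Mathlib

open NumberField
open scoped TensorProduct

/-- The Euclidean minimum of a number field `K`:
`M(K) = sup_{x ∈ K} inf_{c ∈ O_K} |N_{K/ℚ}(x − c)|`. -/
noncomputable def euclideanMinimum (K : Type*) [Field K] [NumberField K] : ℝ :=
  ⨆ x : K, ⨅ c : 𝓞 K, |((Algebra.norm ℚ (x - (c : K)) : ℚ) : ℝ)|

/-- The twisted trace form `q_α(x, y) = Tr_{K/ℚ}(α · x · σ(y))`. -/
noncomputable def qAlpha (K : Type*) [Field K] [NumberField K]
    (σ : K ≃ₐ[ℚ] K) (α : K) : K →ₗ[ℚ] K →ₗ[ℚ] ℚ :=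
  LinearMap.compl₁₂ (Algebra.traceForm ℚ K) (LinearMap.mulLeft ℚ α) σ.toLinearMap

/-- The determinant of the Gram matrix of a bilinear form `B` on `K` with respect to
a ℤ-basis of the ring of integers of `K`. -/
noncomputable def gramDet (K : Type*) [Field K] [NumberField K]
    (B : K →ₗ[ℚ] K →ₗ[ℚ] ℚ) : ℚ :=
  letI := Classical.decEq (Module.Free.ChooseBasisIndex ℤ (𝓞 K))
  (Matrix.of fun i j => B (RingOfIntegers.basis K i) (RingOfIntegers.basis K j)).det

theorem aux_trace_eq (K : Type*) [Field K] [NumberField K]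
    (σ : K ≃ₐ[ℚ] K)
    (hσ : ∀ φ : K →+* ℂ, ∀ x : K, φ (σ x) = starRingEnd ℂ (φ x))
    (α : K) (x y : K) :
    ((qAlpha K σ α x y : ℚ) : ℂ) =
      ∑ φ : K →ₐ[ℚ] ℂ, φ x * (φ α * starRingEnd ℂ (φ y)) := by
  have h := trace_eq_sum_embeddings (K := ℚ) (L := K) ℂ (x := α * x * σ y)
  rw [eq_ratCast] at h
  have h2 : qAlpha K σ α x y = Algebra.trace ℚ K (α * x * σ y) := by
    simp [qAlpha, Algebra.traceForm_apply]
  rw [h2, h]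
  refine Finset.sum_congr rfl fun φ _ => ?_
  have := hσ (φ : K →+* ℂ) y
  simp only [RingHom.coe_coe] at this
  rw [map_mul, map_mul, this]
  ring

theorem aux_amgm {ι : Type*} [Fintype ι] [Nonempty ι] (z : ι → ℝ) (hz : ∀ i, 0 ≤ z i) :
    ∏ i, z i ≤ ((∑ i, z i) / (Fintype.card ι : ℝ)) ^ (Fintype.card ι) := by
  have hc : (0 : ℝ) < Fintype.card ι := by exact_mod_cast Fintype.card_pos
  have h := Real.geom_mean_le_arith_mean Finset.univ (fun _ : ι => (1 : ℝ)) z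
    (by simp) (by simpa using hc) (fun i _ => hz i)
  simp only [Real.rpow_one, Finset.sum_const, Finset.card_univ, nsmul_eq_mul, mul_one,
    one_mul] at h
  have hp : 0 ≤ ∏ i, z i := Finset.prod_nonneg fun i _ => hz i
  have h3 := pow_le_pow_left₀ (Real.rpow_nonneg hp _) h (Fintype.card ι)
  rwa [Real.rpow_inv_natCast_pow hp Fintype.card_ne_zero] at h3

theorem aux_phi_real {K : Type*} [Field K] [NumberField K] {α : K}
    (hαpos : ∀ φ : K →+* ℂ, 0 < (φ α).re ∧ (φ α).im = 0) (φ : K →ₐ[ℚ] ℂ) :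
    φ α = (((φ α).re : ℝ) : ℂ) := by
  have := (hαpos (φ : K →+* ℂ)).2
  apply Complex.ext <;> simp
  simpa using this

theorem aux_norm {K : Type*} [Field K] [NumberField K] {α : K}
    (hαpos : ∀ φ : K →+* ℂ, 0 < (φ α).re ∧ (φ α).im = 0) :
    ((Algebra.norm ℚ α : ℚ) : ℝ) = ∏ φ : K →ₐ[ℚ] ℂ, (φ α).re := by
  have h := Algebra.norm_eq_prod_embeddings ℚ ℂ α
  rw [eq_ratCast, Finset.prod_congr rfl (fun φ _ => aux_phi_real hαpos φ)] at h
  exact_mod_cast h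

theorem aux_gram (K : Type*) [Field K] [NumberField K]
    (σ : K ≃ₐ[ℚ] K)
    (hσ : ∀ φ : K →+* ℂ, ∀ x : K, φ (σ x) = starRingEnd ℂ (φ x))
    (α : K) :
    (gramDet K (qAlpha K σ α) : ℝ) =
      ((Algebra.norm ℚ α : ℚ) : ℝ) * |(NumberField.discr K : ℝ)| := by
  classical
  let e : Module.Free.ChooseBasisIndex ℤ (𝓞 K) ≃ (K →ₐ[ℚ] ℂ) :=
    Fintype.equivOfCardEq (by
      rw [AlgHom.card, ← Module.finrank_eq_card_basis (integralBasis K)])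
  let M := Algebra.embeddingsMatrixReindex ℚ ℂ (integralBasis K) e
  have hM : ∀ i j, M i j = e j (RingOfIntegers.basis K i : K) := by
    intro i j
    simp [M, Algebra.embeddingsMatrixReindex, integralBasis_apply]
  have hd : ((NumberField.discr K : ℤ) : ℂ) = M.det ^ 2 := by
    rw [← Algebra.discr_eq_det_embeddingsMatrixReindex_pow_two, ← coe_discr, map_intCast]
  have hdn : |(NumberField.discr K : ℝ)| = ‖M.det‖ ^ 2 := by
    rw [← norm_pow, ← hd, Complex.norm_intCast]
  have hn := Algebra.norm_eq_prod_embeddings ℚ ℂ α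
  rw [eq_ratCast, ← e.prod_comp] at hn
  have key : ((gramDet K (qAlpha K σ α) : ℚ) : ℂ) =
      (M * (Matrix.diagonal (fun j => e j α) * M.conjTranspose)).det := by
    unfold gramDet
    rw [← eq_ratCast (algebraMap ℚ ℂ), RingHom.map_det]
    convert rfl using 2
    ext i j
    simp only [RingHom.mapMatrix_apply, Matrix.map_apply, Matrix.of_apply, eq_ratCast]
    rw [aux_trace_eq K σ hσ, ← e.sum_comp, Matrix.mul_apply]
    simp [Matrix.diagonal_mul, hM]
  rw [Matrix.det_mul, Matrix.det_mul, Matrix.det_diagonal, Matrix.det_conjTranspose, ← hn] at key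
  have hz : M.det * star M.det = ((‖M.det‖ ^ 2 : ℝ) : ℂ) := by
    rw [Complex.star_def, Complex.mul_conj, Complex.normSq_eq_norm_sq]
  rw [mul_left_comm, hz, ← hdn] at key
  exact_mod_cast key

theorem aux_final (n : ℕ) (hn : n ≠ 0) (μ A D N : ℝ) (hμ : 0 < μ) (hA : 0 < A) (hD : 0 < D)
    (h : A * N ^ 2 ≤ (μ / n) ^ n) :
    |N| ≤ (μ / ((n : ℝ) * (A * D) ^ ((1 : ℝ) / (n : ℝ)))) ^ ((n : ℝ) / 2) * Real.sqrt D := by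
  have hn' : (0 : ℝ) < n := by positivity
  apply abs_le_of_sq_le_sq _ (by positivity)
  have h1 : ((μ / ((n : ℝ) * (A * D) ^ ((1 : ℝ) / (n : ℝ)))) ^ ((n : ℝ) / 2)) ^ 2
      = (μ / n) ^ n / (A * D) := by
    rw [← Real.rpow_natCast, ← Real.rpow_mul (by positivity)]
    rw [show (n : ℝ) / 2 * ((2 : ℕ) : ℝ) = n by push_cast; ring, Real.rpow_natCast,
      ← div_div, div_pow, one_div, Real.rpow_inv_natCast_pow (by positivity) hn]
  rw [mul_pow, h1, Real.sq_sqrt hD.le]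
  rw [show (μ / n) ^ n / (A * D) * D = (μ / n) ^ n / A by field_simp]
  rw [le_div_iff₀ hA]
  linarith

theorem euclideanMinimum_le_of_coveringBound
    (K : Type*) [Field K] [NumberField K]
    -- `σ` is the identity if `K` is totally real and complex conjugation if `K` is a CM field;
    -- the existence of such a `σ` forces `K` to be totally real or totally complex (CM)
    (σ : K ≃ₐ[ℚ] K)
    (hσ : ∀ φ : K →+* ℂ, ∀ x : K, φ (σ x) = starRingEnd ℂ (φ x))
    -- `α` is a totally positive element of the fixed field of `σ`
    (α : K) (hα : σ α = α)
    (hαpos : ∀ φ : K →+* ℂ, 0 < (φ α).re ∧ (φ α).im = 0)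
    (μ : ℝ) (hμpos : 0 < μ)
    -- `max(O_K, q_α) ≤ μ` for the ℝ-bilinear extension of `q_α` to `K ⊗ ℝ`
    (hμ : ∀ x : ℝ ⊗[ℚ] K, ∃ c : 𝓞 K,
      (LinearMap.BilinForm.baseChange ℝ (qAlpha K σ α))
          (x - (1 : ℝ) ⊗ₜ[ℚ] (c : K)) (x - (1 : ℝ) ⊗ₜ[ℚ] (c : K)) ≤ μ) :
    euclideanMinimum K ≤
      (μ / ((Module.finrank ℚ K : ℝ) *
          (gramDet K (qAlpha K σ α) : ℝ) ^ ((1 : ℝ) / (Module.finrank ℚ K : ℝ)))) ^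
        ((Module.finrank ℚ K : ℝ) / 2) *
      Real.sqrt |(NumberField.discr K : ℝ)| := by
  have hNpos : 0 < ((Algebra.norm ℚ α : ℚ) : ℝ) := by
    rw [aux_norm hαpos]
    exact Finset.prod_pos fun φ _ => (hαpos (φ : K →+* ℂ)).1
  have hD : 0 < |(NumberField.discr K : ℝ)| := by
    rw [abs_pos]; exact_mod_cast NumberField.discr_ne_zero K
  rw [aux_gram K σ hσ α]
  refine ciSup_le fun x => ?_
  obtain ⟨c, hc⟩ := hμ ((1 : ℝ) ⊗ₜ[ℚ] x)
  refine ciInf_le_of_le ⟨0, by rintro _ ⟨c, rfl⟩; exact abs_nonneg _⟩ c ?_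
  apply aux_final _ Module.finrank_pos.ne' _ _ _ _ hμpos hNpos hD
  rw [← TensorProduct.tmul_sub, LinearMap.BilinForm.baseChange_tmul] at hc
  set y : K := x - (c : K) with hy
  have hq : ((qAlpha K σ α y y : ℚ) : ℝ) ≤ μ := by
    simpa [Rat.smul_def] using hc
  have hsum : ((qAlpha K σ α y y : ℚ) : ℝ) =
      ∑ φ : K →ₐ[ℚ] ℂ, (φ α).re * ‖φ y‖ ^ 2 := by
    have h := aux_trace_eq K σ hσ α y y
    have h2 : ∀ φ : K →ₐ[ℚ] ℂ, φ y * (φ α * starRingEnd ℂ (φ y)) =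
        (((φ α).re * ‖φ y‖ ^ 2 : ℝ) : ℂ) := by
      intro φ
      rw [mul_left_comm, Complex.mul_conj, Complex.normSq_eq_norm_sq, Complex.ofReal_mul,
        ← aux_phi_real hαpos φ]
    rw [Finset.sum_congr rfl (fun φ _ => h2 φ)] at h
    exact_mod_cast h
  have hprod : ((Algebra.norm ℚ y : ℚ) : ℝ) ^ 2 = ∏ φ : K →ₐ[ℚ] ℂ, ‖φ y‖ ^ 2 := by
    have h := Algebra.norm_eq_prod_embeddings ℚ ℂ y
    rw [eq_ratCast] at h
    have h' := congrArg norm h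
    rw [norm_prod, Complex.norm_ratCast] at h'
    rw [Finset.prod_pow, ← h', sq_abs]
  have hcard : Fintype.card (K →ₐ[ℚ] ℂ) = Module.finrank ℚ K := AlgHom.card ℚ K ℂ
  have hne : Nonempty (K →ₐ[ℚ] ℂ) :=
    Fintype.card_pos_iff.mp (by rw [hcard]; exact Module.finrank_pos)
  have hnn : ∀ φ : K →ₐ[ℚ] ℂ, 0 ≤ (φ α).re * ‖φ y‖ ^ 2 := fun φ =>
    mul_nonneg (hαpos (φ : K →+* ℂ)).1.le (by positivity)
  have ham := aux_amgm (fun φ : K →ₐ[ℚ] ℂ => (φ α).re * ‖φ y‖ ^ 2) hnn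
  rw [Finset.prod_mul_distrib, ← aux_norm hαpos, ← hprod, ← hsum, hcard] at ham
  refine ham.trans ?_
  have h0 : 0 ≤ ((qAlpha K σ α y y : ℚ) : ℝ) := by
    rw [hsum]; exact Finset.sum_nonneg fun φ _ => hnn φ
  gcongr
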